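/- arXiv:2101.09860 — 3 statements merged into one kernel-verified Lean document; each statement's English description precedes it below -/
import Mathlib

section
/- Let {W_{−k}}_{k∈ℕ}, {W_{k+1}}_{k∈ℕ}, {G̃_{k+1}}_{k∈ℕ} be elements of the q-Onsager algebra O_q with W_{−0} = W0 and W_1 = W1 (the generators), and suppose that for all k ∈ ℕ: [G̃_{k+1}, W0]_q = ρ W_{−k−1} − ρ W_{k+1} and [W1, G̃_{k+1}]_q = ρ W_{k+2} − ρ W_{−k}, where ρ = −(q²−q^{−2})². Then for every odd integer k = 2r+1 ≥ 1: W_{−k} = W1 − Σ_{ℓ=0}^{r} [G̃_{2ℓ+1}, W0]_q/(q²−q^{−2})² − Σ_{ℓ=1}^{r} [W1, G̃_{2ℓ}]_q/(q²−q^{−2})² and W_{k+1} = W0 − Σ_{ℓ=0}^{r} [W1, G̃_{2ℓ+1}]_q/(q²−q^{−2})² − Σ_{ℓ=1}^{r} [G̃_{2ℓ}, W0]_q/(q²−q^{−2})²; and for every even integer k = 2r ≥ 2: W_{−k} = W0 − Σ_{ℓ=0}^{r−1} [W1, G̃_{2ℓ+1}]_q/(q²−q^{−2})² − Σ_{ℓ=1}^{r}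 [G̃_{2ℓ}, W0]_q/(q²−q^{−2})² and W_{k+1} = W1 − Σ_{ℓ=0}^{r−1} [G̃_{2ℓ+1}, W0]_q/(q²−q^{−2})² − Σ_{ℓ=1}^{r} [W1, G̃_{2ℓ}]_q/(q²−q^{−2})². -/
/-!
Dividing the two hypotheses by `ρ = -(q² - q⁻²)²`, which is nonzero because `q⁴ ≠ 1`, turns them
into the additive recursion `W_{-k-1} = W_{k+1} - a_k`, `W_{k+2} = W_{-k} - b_k`, where
`a_k = [G̃_{k+1}, W₀]_q / (q² - q⁻²)²` and `b_k = [W₁, G̃_{k+1}]_q / (q² - q⁻²)²`. Each step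
swaps the two sequences, so two steps return to the same sequence and lower it by one `a` and
one `b`; the even-index formulas follow by induction on `r` (`even_index_sums`), and the odd-index
formulas are one further step. The Dolan/Grady relations play no role.
-/

/-- Commutator `[X,Y] = XY - YX`. -/
def cm {R : Type*} [Ring R] (X Y : R) : R := X * Y - Y * X

/-- `q`-commutator `[X,Y]_q = q XY - q⁻¹ YX`. -/
noncomputable def cq {F R : Type*} [Field F] [Ring R] [Algebra F R] (q : F) (X Y : R) : R :=
  q • (X * Y) - q⁻¹ • (Y * X)

/-- The defining relations (the `q`-Dolan/Grady relations) of the `q`-Onsager algebra,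
on the free algebra on two generators `W₀ = ι false`, `W₁ = ι true`. -/
inductive OnsRel (F : Type*) [Field F] (q : F) :
    FreeAlgebra F Bool → FreeAlgebra F Bool → Prop
  | r0 : OnsRel F q
      (cm (FreeAlgebra.ι F false)
        (cq q⁻¹ (FreeAlgebra.ι F false)
          (cq q (FreeAlgebra.ι F false) (FreeAlgebra.ι F true))))
      (((q ^ 2 - q⁻¹ ^ 2) ^ 2) • cm (FreeAlgebra.ι F true) (FreeAlgebra.ι F false))
  | r1 : OnsRel F q
      (cm (FreeAlgebra.ι F true)
        (cq q⁻¹ (FreeAlgebra.ι F true)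
          (cq q (FreeAlgebra.ι F true) (FreeAlgebra.ι F false))))
      (((q ^ 2 - q⁻¹ ^ 2) ^ 2) • cm (FreeAlgebra.ι F false) (FreeAlgebra.ι F true))

/-- The `q`-Onsager algebra `O_q`: the free algebra on `W₀, W₁` modulo the
`q`-Dolan/Grady relations. -/
abbrev qOnsager (F : Type*) [Field F] (q : F) := RingQuot (OnsRel F q)

/-- The generator `W₀` of `O_q`. -/
noncomputable def OW0 (F : Type*) [Field F] (q : F) : qOnsager F q :=
  RingQuot.mkAlgHom F (OnsRel F q) (FreeAlgebra.ι F false)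

/-- The generator `W₁` of `O_q`. -/
noncomputable def OW1 (F : Type*) [Field F] (q : F) : qOnsager F q :=
  RingQuot.mkAlgHom F (OnsRel F q) (FreeAlgebra.ι F true)

/-- The element `B_δ = q⁻² W₁ W₀ - W₀ W₁` of `O_q`. -/
noncomputable def OBdelta (F : Type*) [Field F] (q : F) : qOnsager F q :=
  (q⁻¹ ^ 2) • (OW1 F q * OW0 F q) - OW0 F q * OW1 F q

/-- Solution at even indices of the swapping recursion `x (k+1) = y k - a k`,
`y (k+1) = x k - b k` in an additive commutative group. -/
lemma even_index_sums {A : Type*} [AddCommGroup A] (x y a b : ℕ → A)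
    (hx : ∀ k, x (k + 1) = y k - a k) (hy : ∀ k, y (k + 1) = x k - b k) (r : ℕ) :
    x (2 * r) = x 0 - ∑ l ∈ Finset.range r, b (2 * l) - ∑ l ∈ Finset.Icc 1 r, a (2 * l - 1) ∧
    y (2 * r) = y 0 - ∑ l ∈ Finset.range r, a (2 * l) - ∑ l ∈ Finset.Icc 1 r, b (2 * l - 1) := by
  induction r with
  | zero => simp
  | succ r ih =>
    have e1 : 2 * (r + 1) = 2 * r + 1 + 1 := by ring
    have e2 : 2 * (r + 1) - 1 = 2 * r + 1 := by lia
    rw [Finset.sum_range_succ, Finset.sum_range_succ,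
      Finset.sum_Icc_succ_top (by lia), Finset.sum_Icc_succ_top (by lia), e2, e1,
      hx (2 * r + 1), hy (2 * r + 1), hx (2 * r), hy (2 * r), ih.1, ih.2]
    constructor <;> abel

/-- Division of a relation `z = -c x - (-c) y` by `-c`. -/
lemma eq_sub_inv_smul {F A : Type*} [Field F] [AddCommGroup A] [Module F A] {c : F} (hc : c ≠ 0)
    {x y z : A} (h : z = (-c) • x - (-c) • y) : x = y - c⁻¹ • z := by
  rw [h, smul_sub, smul_smul, smul_smul, mul_neg, inv_mul_cancel₀ hc, neg_one_smul, neg_one_smul]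
  abel

/-- In `O_q`, given sequences `W_{-k} = Wm k`, `W_{k+1} = Wp k`,
`G̃_{k+1} = Gt k` with `Wm 0 = W₀`, `Wp 0 = W₁`, satisfying
`[G̃_{k+1}, W₀]_q = ρ W_{-k-1} - ρ W_{k+1}` and `[W₁, G̃_{k+1}]_q = ρ W_{k+2} - ρ W_{-k}`
with `ρ = -(q²-q⁻²)²`, the elements `W_{-k}`, `W_{k+1}` are given by the displayed
closed-form sums, for odd `k = 2r+1 ≥ 1` and for even `k = 2r ≥ 2`. -/
theorem stmt9 {F : Type*} [Field F] (q : F) (hq0 : q ≠ 0)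
    (hq : ∀ n : ℕ, 0 < n → q ^ n ≠ 1)
    (Wm Wp Gt : ℕ → qOnsager F q)
    (hWm0 : Wm 0 = OW0 F q) (hWp0 : Wp 0 = OW1 F q)
    (h1 : ∀ k : ℕ, cq q (Gt k) (OW0 F q) =
      (-(q ^ 2 - q⁻¹ ^ 2) ^ 2) • Wm (k + 1) - (-(q ^ 2 - q⁻¹ ^ 2) ^ 2) • Wp k)
    (h2 : ∀ k : ℕ, cq q (OW1 F q) (Gt k) =
      (-(q ^ 2 - q⁻¹ ^ 2) ^ 2) • Wp (k + 1) - (-(q ^ 2 - q⁻¹ ^ 2) ^ 2) • Wm k) :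
    (∀ r : ℕ,
      (Wm (2 * r + 1) = OW1 F q
        - ∑ l ∈ Finset.range (r + 1),
            (((q ^ 2 - q⁻¹ ^ 2) ^ 2)⁻¹) • cq q (Gt (2 * l)) (OW0 F q)
        - ∑ l ∈ Finset.Icc 1 r,
            (((q ^ 2 - q⁻¹ ^ 2) ^ 2)⁻¹) • cq q (OW1 F q) (Gt (2 * l - 1))) ∧
      (Wp (2 * r + 1) = OW0 F q
        - ∑ l ∈ Finset.range (r + 1),
            (((q ^ 2 - q⁻¹ ^ 2) ^ 2)⁻¹) • cq q (OW1 F q) (Gt (2 * l))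
        - ∑ l ∈ Finset.Icc 1 r,
            (((q ^ 2 - q⁻¹ ^ 2) ^ 2)⁻¹) • cq q (Gt (2 * l - 1)) (OW0 F q))) ∧
    (∀ r : ℕ, 1 ≤ r →
      (Wm (2 * r) = OW0 F q
        - ∑ l ∈ Finset.range r,
            (((q ^ 2 - q⁻¹ ^ 2) ^ 2)⁻¹) • cq q (OW1 F q) (Gt (2 * l))
        - ∑ l ∈ Finset.Icc 1 r,
            (((q ^ 2 - q⁻¹ ^ 2) ^ 2)⁻¹) • cq q (Gt (2 * l - 1)) (OW0 F q)) ∧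
      (Wp (2 * r) = OW1 F q
        - ∑ l ∈ Finset.range r,
            (((q ^ 2 - q⁻¹ ^ 2) ^ 2)⁻¹) • cq q (Gt (2 * l)) (OW0 F q)
        - ∑ l ∈ Finset.Icc 1 r,
            (((q ^ 2 - q⁻¹ ^ 2) ^ 2)⁻¹) • cq q (OW1 F q) (Gt (2 * l - 1)))) := by
  have hc : (q ^ 2 - q⁻¹ ^ 2) ^ 2 ≠ 0 := by
    refine pow_ne_zero 2 fun h => hq 4 (by norm_num) ?_
    have h' : q ^ 2 = q⁻¹ ^ 2 := sub_eq_zero.mp h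
    calc q ^ 4 = q ^ 2 * q ^ 2 := by ring
      _ = q ^ 2 * q⁻¹ ^ 2 := by rw [← h']
      _ = 1 := by rw [← mul_pow, mul_inv_cancel₀ hq0, one_pow]
  have hx := fun k => eq_sub_inv_smul hc (h1 k)
  have hy := fun k => eq_sub_inv_smul hc (h2 k)
  have key := even_index_sums Wm Wp
    (fun k => ((q ^ 2 - q⁻¹ ^ 2) ^ 2)⁻¹ • cq q (Gt k) (OW0 F q))
    (fun k => ((q ^ 2 - q⁻¹ ^ 2) ^ 2)⁻¹ • cq q (OW1 F q) (Gt k)) hx hy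
  rw [hWm0, hWp0] at key
  refine ⟨fun r => ⟨?_, ?_⟩, fun r _ => key r⟩
  · rw [hx, (key r).2, Finset.sum_range_succ]
    abel
  · rw [hy, (key r).1, Finset.sum_range_succ]
    abel
end

section
/- Let {W_{−k}}_{k∈ℕ}, {W_{k+1}}_{k∈ℕ}, {G̃_{k+1}}_{k∈ℕ} be elements of the q-Onsager algebra O_q with W_{−0} = W0 and W_1 = W1 (the generators), satisfying: G̃_1 = −q B_δ; for all k ∈ ℕ, [W_{−k}, G̃_1] + [G̃_{k+1}, W0] = 0 and [W_{k+1}, G̃_1] + [G̃_{k+1}, W1] = 0; and for all k ∈ ℕ, [G̃_{k+1}, W0]_q = ρ W_{−k−1} − ρ W_{k+1} and [W1, G̃_{k+1}]_q = ρ W_{k+2} − ρ W_{−k}, where ρ = −(q²−q^{−2})². Then for all n ≥ 1: W_{−n} = W_n − (q−q^{−1}) W0 G̃_n/(q²−q^{−2})² + q² [B_δ, W_{1−n}]/(q²−q^{−2})², and W_{n+1} = W_{1−n} − (q−q^{−1}) W1 G̃_n/(q²−q^{−2})² − [B_δ, W_n]/(q²−q^{−2})². (Here W_m for m ≥ 1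 refers to the sequence {W_{k+1}} and W_{1−n} for n ≥ 1 refers to W0 when n = 1 and to W_{−(n−1)} when n ≥ 2.) -/
section Reorder

variable {F R : Type*} [Field F] [Ring R] [Algebra F R]

lemma mul_swap_of_cm {q : F} {B G G1 X W : R} (hG1 : G1 = (-q) • B)
    (h : cm X G1 + cm G W = 0) : G * W = W * G - q • cm B X := by
  subst hG1
  simp only [cm, mul_smul_comm, smul_mul_assoc] at h ⊢
  linear_combination (norm := module) h

/-- Solves `[G, W]_q = -c (Y - Z)` for `Y`, once `G W` has been reordered. -/
lemma solve_left {q c : F} (hc : c ≠ 0) {G W D Y Z : R}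
    (hs : G * W = W * G - q • D) (h : cq q G W = (-c) • Y - (-c) • Z) :
    Y = Z - ((q - q⁻¹) * c⁻¹) • (W * G) + (q ^ 2 * c⁻¹) • D := by
  rw [cq, hs] at h
  have hY : c • Y = c • Z - (q - q⁻¹) • (W * G) + q ^ 2 • D := by
    linear_combination (norm := module) h
  rw [← inv_smul_smul₀ hc Y, hY, smul_add, smul_sub, inv_smul_smul₀ hc]
  module

/-- Solves `[W, G]_q = -c (Y - Z)` for `Y`, once `G W` has been reordered. -/
lemma solve_right {q c : F} (hq0 : q ≠ 0) (hc : c ≠ 0) {G W D Y Z : R}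
    (hs : G * W = W * G - q • D) (h : cq q W G = (-c) • Y - (-c) • Z) :
    Y = Z - ((q - q⁻¹) * c⁻¹) • (W * G) - c⁻¹ • D := by
  rw [cq, hs, smul_sub, inv_smul_smul₀ hq0] at h
  have hY : c • Y = c • Z - (q - q⁻¹) • (W * G) - D := by
    linear_combination (norm := module) h
  rw [← inv_smul_smul₀ hc Y, hY, smul_sub, smul_sub, inv_smul_smul₀ hc]
  module

end Reorder

/-- In `O_q`, given sequences `W_{-k} = Wm k`, `W_{k+1} = Wp k`,
`G̃_{k+1} = Gt k` with `Wm 0 = W₀`, `Wp 0 = W₁`, satisfying `G̃₁ = -q B_δ`,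
`[W_{-k}, G̃₁] + [G̃_{k+1}, W₀] = 0`, `[W_{k+1}, G̃₁] + [G̃_{k+1}, W₁] = 0`,
`[G̃_{k+1}, W₀]_q = ρ W_{-k-1} - ρ W_{k+1}` and `[W₁, G̃_{k+1}]_q = ρ W_{k+2} - ρ W_{-k}`
(`ρ = -(q²-q⁻²)²`), we have for all `n ≥ 1`:
`W_{-n} = W_n - (q-q⁻¹) W₀ G̃_n/(q²-q⁻²)² + q² [B_δ, W_{1-n}]/(q²-q⁻²)²` and
`W_{n+1} = W_{1-n} - (q-q⁻¹) W₁ G̃_n/(q²-q⁻²)² - [B_δ, W_n]/(q²-q⁻²)²`,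
where `W_n = Wp (n-1)`, `G̃_n = Gt (n-1)` and `W_{1-n} = Wm (n-1)` (recall `Wm 0 = W₀`). -/
theorem stmt11 {F : Type*} [Field F] (q : F) (hq0 : q ≠ 0)
    (hq : ∀ n : ℕ, 0 < n → q ^ n ≠ 1)
    (Wm Wp Gt : ℕ → qOnsager F q)
    (hWm0 : Wm 0 = OW0 F q) (hWp0 : Wp 0 = OW1 F q)
    (hG1 : Gt 0 = (-q) • OBdelta F q)
    (hA : ∀ k : ℕ, cm (Wm k) (Gt 0) + cm (Gt k) (OW0 F q) = 0)
    (hB : ∀ k : ℕ, cm (Wp k) (Gt 0) + cm (Gt k) (OW1 F q) = 0)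
    (h1 : ∀ k : ℕ, cq q (Gt k) (OW0 F q) =
      (-(q ^ 2 - q⁻¹ ^ 2) ^ 2) • Wm (k + 1) - (-(q ^ 2 - q⁻¹ ^ 2) ^ 2) • Wp k)
    (h2 : ∀ k : ℕ, cq q (OW1 F q) (Gt k) =
      (-(q ^ 2 - q⁻¹ ^ 2) ^ 2) • Wp (k + 1) - (-(q ^ 2 - q⁻¹ ^ 2) ^ 2) • Wm k) :
    ∀ n : ℕ, 1 ≤ n →
      (Wm n = Wp (n - 1)
        - ((q - q⁻¹) * ((q ^ 2 - q⁻¹ ^ 2) ^ 2)⁻¹) • (OW0 F q * Gt (n - 1))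
        + (q ^ 2 * ((q ^ 2 - q⁻¹ ^ 2) ^ 2)⁻¹) • cm (OBdelta F q) (Wm (n - 1))) ∧
      (Wp n = Wm (n - 1)
        - ((q - q⁻¹) * ((q ^ 2 - q⁻¹ ^ 2) ^ 2)⁻¹) • (OW1 F q * Gt (n - 1))
        - (((q ^ 2 - q⁻¹ ^ 2) ^ 2)⁻¹) • cm (OBdelta F q) (Wp (n - 1))) := by
  have hc : (q ^ 2 - q⁻¹ ^ 2) ^ 2 ≠ 0 := by
    refine pow_ne_zero 2 fun h => hq 4 (by norm_num) ?_
    field_simp at h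
    linear_combination h
  intro n hn
  obtain ⟨k, rfl⟩ : ∃ k, n = k + 1 := ⟨n - 1, by omega⟩
  rw [Nat.add_sub_cancel]
  exact ⟨solve_left hc (mul_swap_of_cm hG1 (hA k)) (h1 k),
    solve_right hq0 hc (mul_swap_of_cm hG1 (hB k)) (h2 k)⟩
end

section
/- In the universal Askey–Wilson algebra Δ_q, with C' = C + [A,B]/(q−q^{−1}), the following three identities hold: B + (q A C' − q^{−1} C' A)/(q²−q^{−2}) = β/(q+q^{−1}); A + (q C' B − q^{−1} B C')/(q²−q^{−2}) = α/(q+q^{−1}); C' + (q B A − q^{−1} A B)/(q²−q^{−2}) = γ/(q+q^{−1}). -/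
/-- `A + (qBC - q⁻¹CB)/(q²-q⁻²)` in the free algebra on `A = ι 0`, `B = ι 1`, `C = ι 2`. -/
noncomputable def awC1 (F : Type*) [Field F] (q : F) : FreeAlgebra F (Fin 3) :=
  FreeAlgebra.ι F 0 + ((q ^ 2 - q⁻¹ ^ 2)⁻¹) •
    (q • (FreeAlgebra.ι F 1 * FreeAlgebra.ι F 2) -
      q⁻¹ • (FreeAlgebra.ι F 2 * FreeAlgebra.ι F 1))

/-- `B + (qCA - q⁻¹AC)/(q²-q⁻²)` in the free algebra. -/
noncomputable def awC2 (F : Type*) [Field F] (q : F) : FreeAlgebra F (Fin 3) :=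
  FreeAlgebra.ι F 1 + ((q ^ 2 - q⁻¹ ^ 2)⁻¹) •
    (q • (FreeAlgebra.ι F 2 * FreeAlgebra.ι F 0) -
      q⁻¹ • (FreeAlgebra.ι F 0 * FreeAlgebra.ι F 2))

/-- `C + (qAB - q⁻¹BA)/(q²-q⁻²)` in the free algebra. -/
noncomputable def awC3 (F : Type*) [Field F] (q : F) : FreeAlgebra F (Fin 3) :=
  FreeAlgebra.ι F 2 + ((q ^ 2 - q⁻¹ ^ 2)⁻¹) •
    (q • (FreeAlgebra.ι F 0 * FreeAlgebra.ι F 1) -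
      q⁻¹ • (FreeAlgebra.ι F 1 * FreeAlgebra.ι F 0))

/-- The defining relations of the universal Askey–Wilson algebra `Δ_q`: each of the
three elements `awC1`, `awC2`, `awC3` is central. -/
inductive AWRel (F : Type*) [Field F] (q : F) :
    FreeAlgebra F (Fin 3) → FreeAlgebra F (Fin 3) → Prop
  | relA (x : FreeAlgebra F (Fin 3)) : AWRel F q (awC1 F q * x) (x * awC1 F q)
  | relB (x : FreeAlgebra F (Fin 3)) : AWRel F q (awC2 F q * x) (x * awC2 F q)
  | relC (x : FreeAlgebra F (Fin 3)) : AWRel F q (awC3 F q * x) (x * awC3 F q)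

/-- The universal Askey–Wilson algebra `Δ_q`. -/
abbrev AW (F : Type*) [Field F] (q : F) := RingQuot (AWRel F q)

/-- The generator `A` of `Δ_q`. -/
noncomputable def aA (F : Type*) [Field F] (q : F) : AW F q :=
  RingQuot.mkAlgHom F (AWRel F q) (FreeAlgebra.ι F 0)

/-- The generator `B` of `Δ_q`. -/
noncomputable def aB (F : Type*) [Field F] (q : F) : AW F q :=
  RingQuot.mkAlgHom F (AWRel F q) (FreeAlgebra.ι F 1)

/-- The generator `C` of `Δ_q`. -/
noncomputable def aC (F : Type*) [Field F] (q : F) : AW F q :=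
  RingQuot.mkAlgHom F (AWRel F q) (FreeAlgebra.ι F 2)

/-- The central element `α = (q+q⁻¹)(A + (qBC - q⁻¹CB)/(q²-q⁻²))` of `Δ_q`. -/
noncomputable def aAlpha (F : Type*) [Field F] (q : F) : AW F q :=
  (q + q⁻¹) • (aA F q + ((q ^ 2 - q⁻¹ ^ 2)⁻¹) •
    (q • (aB F q * aC F q) - q⁻¹ • (aC F q * aB F q)))

/-- The central element `β = (q+q⁻¹)(B + (qCA - q⁻¹AC)/(q²-q⁻²))` of `Δ_q`. -/
noncomputable def aBeta (F : Type*) [Field F] (q : F) : AW F q :=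
  (q + q⁻¹) • (aB F q + ((q ^ 2 - q⁻¹ ^ 2)⁻¹) •
    (q • (aC F q * aA F q) - q⁻¹ • (aA F q * aC F q)))

/-- The central element `γ = (q+q⁻¹)(C + (qAB - q⁻¹BA)/(q²-q⁻²))` of `Δ_q`. -/
noncomputable def aGamma (F : Type*) [Field F] (q : F) : AW F q :=
  (q + q⁻¹) • (aC F q + ((q ^ 2 - q⁻¹ ^ 2)⁻¹) •
    (q • (aA F q * aB F q) - q⁻¹ • (aB F q * aA F q)))

/-- The element `C' = C + [A,B]/(q-q⁻¹)` of `Δ_q`. -/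
noncomputable def aCp (F : Type*) [Field F] (q : F) : AW F q :=
  aC F q + ((q - q⁻¹)⁻¹) • cm (aA F q) (aB F q)

/-- The element `C + (qAB - q⁻¹BA)/(q²-q⁻²) = γ/(q+q⁻¹)` of `Δ_q`. -/
noncomputable def awG (F : Type*) [Field F] (q : F) : AW F q :=
  aC F q + ((q ^ 2 - q⁻¹ ^ 2)⁻¹) • (q • (aA F q * aB F q) - q⁻¹ • (aB F q * aA F q))

theorem awG_comm {F : Type*} [Field F] (q : F) (x : FreeAlgebra F (Fin 3)) :
    awG F q * RingQuot.mkAlgHom F (AWRel F q) x =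
      RingQuot.mkAlgHom F (AWRel F q) x * awG F q := by
  have h := RingQuot.mkAlgHom_rel F (AWRel.relC (F := F) (q := q) x)
  simpa only [awC3, awG, aA, aB, aC, map_mul, map_add, map_sub, map_smul] using h

theorem swap_left {F R : Type*} [Field F] [Ring R] [Algebra F R] (q p k : F) (A B g : R)
    (hg : g * A = A * g) :
    q • (A * (g - k • (q • (B * A) - p • (A * B)))) -
        p • ((g - k • (q • (B * A) - p • (A * B))) * A) =
      q • ((g - k • (q • (A * B) - p • (B * A))) * A) -
        p • (A * (g - k • (q • (A * B) - p • (B * A)))) := by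
  simp only [mul_sub, sub_mul, smul_mul_assoc, mul_smul_comm, mul_assoc, hg]
  module

theorem swap_right {F R : Type*} [Field F] [Ring R] [Algebra F R] (q p k : F) (A B g : R)
    (hg : g * B = B * g) :
    q • ((g - k • (q • (B * A) - p • (A * B))) * B) -
        p • (B * (g - k • (q • (B * A) - p • (A * B)))) =
      q • (B * (g - k • (q • (A * B) - p • (B * A)))) -
        p • ((g - k • (q • (A * B) - p • (B * A))) * B) := by
  simp only [mul_sub, sub_mul, smul_mul_assoc, mul_smul_comm, mul_assoc, hg]
  module

/-- In `Δ_q`, with `C' = C + [A,B]/(q-q⁻¹)`: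
`B + (qAC' - q⁻¹C'A)/(q²-q⁻²) = β/(q+q⁻¹)`,
`A + (qC'B - q⁻¹BC')/(q²-q⁻²) = α/(q+q⁻¹)`,
`C' + (qBA - q⁻¹AB)/(q²-q⁻²) = γ/(q+q⁻¹)`. -/
theorem stmt14 {F : Type*} [Field F] (q : F) (hq0 : q ≠ 0)
    (hq : ∀ n : ℕ, 0 < n → q ^ n ≠ 1) :
    (aB F q + ((q ^ 2 - q⁻¹ ^ 2)⁻¹) •
        (q • (aA F q * aCp F q) - q⁻¹ • (aCp F q * aA F q)) =
      ((q + q⁻¹)⁻¹) • aBeta F q) ∧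
    (aA F q + ((q ^ 2 - q⁻¹ ^ 2)⁻¹) •
        (q • (aCp F q * aB F q) - q⁻¹ • (aB F q * aCp F q)) =
      ((q + q⁻¹)⁻¹) • aAlpha F q) ∧
    (aCp F q + ((q ^ 2 - q⁻¹ ^ 2)⁻¹) •
        (q • (aB F q * aA F q) - q⁻¹ • (aA F q * aB F q)) =
      ((q + q⁻¹)⁻¹) • aGamma F q) := by
  have h4 : q ^ 4 ≠ 1 := hq 4 (by norm_num)
  -- `q + q⁻¹ = 0` would force `q² = -1`, hence `q⁴ = 1`.
  have hp : q + q⁻¹ ≠ 0 := by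
    intro h
    apply h4
    have h' : q ^ 2 + 1 = 0 := by
      have := congrArg (· * q) h
      simpa [add_mul, hq0, sq] using this
    linear_combination (q ^ 2 - 1) * h'
  have hk : (q - q⁻¹)⁻¹ = (q + q⁻¹) * (q ^ 2 - q⁻¹ ^ 2)⁻¹ := by
    have hf : q ^ 2 - q⁻¹ ^ 2 = (q + q⁻¹) * (q - q⁻¹) := by ring
    rw [hf, mul_inv, mul_inv_cancel_left₀ hp]
  have hC : aC F q = awG F q - ((q ^ 2 - q⁻¹ ^ 2)⁻¹) •
      (q • (aA F q * aB F q) - q⁻¹ • (aB F q * aA F q)) := by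
    rw [awG, add_sub_cancel_right]
  have hC' : aCp F q = awG F q - ((q ^ 2 - q⁻¹ ^ 2)⁻¹) •
      (q • (aB F q * aA F q) - q⁻¹ • (aA F q * aB F q)) := by
    rw [aCp, awG, cm, hk]
    module
  refine ⟨?_, ?_, ?_⟩
  · rw [aBeta, inv_smul_smul₀ hp, hC, hC', swap_left _ _ _ (aA F q) _ _ (awG_comm q _)]
  · rw [aAlpha, inv_smul_smul₀ hp, hC, hC', swap_right _ _ _ _ (aB F q) _ (awG_comm q _)]
  · rw [aGamma, inv_smul_smul₀ hp, hC', sub_add_cancel, awG]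
end
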